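/- Let T > 0, let σ : ℝ → ℝ be Lipschitz continuous with σ(x) > 0 for all x, let b and b̃ belong to the class M, and let f : ℝ → ℝ be of class C² with f'(x) ≠ 0 for all x ∈ ℝ. Let u be a classical solution of the parabolic equation associated with (b, σ, f) and let ũ be a classical solution of the parabolic equation associated with (b̃, σ, f). If there exist ε ∈ (0, T) and a nonempty open set ω ⊂ ℝ such that u(t,x) = ũ(t,x) for all t ∈ (0, ε) and all x ∈ ω, then b(x) = b̃(x) for all x ∈ ℝ. -/

import Mathlib

open Set Filter

/-- A function `ψ : ℝ → ℝ` is piecewise analytic if there exist `δ > 0`, a strictly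
increasing sequence `(κ j)_{j ∈ ℤ}` tending to `-∞` at `-∞` and `+∞` at `+∞` with
`κ (j+1) - κ j > δ`, and functions `φ j` analytic on `[κ j, κ (j+1)]`, such that
`ψ = φ j` on `[κ j, κ (j+1))`. -/
def PiecewiseAnalytic (ψ : ℝ → ℝ) : Prop :=
  ∃ (δ : ℝ) (κ : ℤ → ℝ) (φ : ℤ → ℝ → ℝ),
    0 < δ ∧ StrictMono κ ∧
    Tendsto κ atBot atBot ∧ Tendsto κ atTop atTop ∧
    (∀ j : ℤ, δ < κ (j + 1) - κ j) ∧
    (∀ j : ℤ, AnalyticOn ℝ (φ j) (Icc (κ j) (κ (j + 1)))) ∧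
    (∀ j : ℤ, ∀ x ∈ Ico (κ j) (κ (j + 1)), ψ x = φ j x)

/-- The class `M` of Lipschitz-continuous, piecewise analytic functions on `ℝ`. -/
def ClassM (ψ : ℝ → ℝ) : Prop :=
  (∃ K, LipschitzWith K ψ) ∧ PiecewiseAnalytic ψ

/-- `u : [0,T) × ℝ → ℝ` is a classical solution of
`∂ₜ u = (1/2) σ(x)² ∂ₓₓ u + b(x) ∂ₓ u`, `u(0, ·) = f`:
`u`, `∂ₜ u`, `∂ₓ u`, `∂ₓₓ u` exist and are continuous on `[0,T) × ℝ`, the PDE holds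
there, and the initial condition holds. -/
def IsClassicalSolution (T : ℝ) (b σ f : ℝ → ℝ) (u : ℝ → ℝ → ℝ) : Prop :=
  ContinuousOn (fun p : ℝ × ℝ => u p.1 p.2) (Ico 0 T ×ˢ univ) ∧
  (∀ t ∈ Ico 0 T, ∀ x : ℝ, DifferentiableAt ℝ (fun s => u s x) t) ∧
  (∀ t ∈ Ico 0 T, ∀ x : ℝ, DifferentiableAt ℝ (fun y => u t y) x) ∧
  (∀ t ∈ Ico 0 T, ∀ x : ℝ, DifferentiableAt ℝ (deriv (fun y => u t y)) x) ∧
  ContinuousOn (fun p : ℝ × ℝ => deriv (fun s => u s p.2) p.1) (Ico 0 T ×ˢ univ) ∧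
  ContinuousOn (fun p : ℝ × ℝ => deriv (fun y => u p.1 y) p.2) (Ico 0 T ×ˢ univ) ∧
  ContinuousOn (fun p : ℝ × ℝ => deriv (deriv (fun y => u p.1 y)) p.2) (Ico 0 T ×ˢ univ) ∧
  (∀ t ∈ Ico 0 T, ∀ x : ℝ,
    deriv (fun s => u s x) t =
      (1 / 2) * (σ x) ^ 2 * deriv (deriv (fun y => u t y)) x
        + b x * deriv (fun y => u t y) x) ∧
  (∀ x : ℝ, u 0 x = f x)


/-- Comparison for the initial value problem. -/
lemma ivp_cmp (l r s : ℝ) (a b Y Y1 Y2 : ℝ → ℝ) (hs : 0 < s)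
    (h1 : ∀ x, HasDerivAt Y (Y1 x) x) (h2 : ∀ x, HasDerivAt Y1 (Y2 x) x)
    (ha : ∀ x ∈ Icc l r, 0 < a x)
    (hL : ∀ x ∈ Icc l r, 0 < a x * Y2 x + b x * Y1 x - s * Y x)
    (hl : 0 < Y l) (hl1 : 0 < Y1 l) :
    ∀ x ∈ Icc l r, 0 < Y x ∧ 0 < Y1 x := by
  have hcY1 : Continuous Y1 := continuous_iff_continuousAt.2 fun x => (h2 x).continuousAt
  have hcY : Continuous Y := continuous_iff_continuousAt.2 fun x => (h1 x).continuousAt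
  have key : ∀ z, (∀ x ∈ Ico l z, 0 < Y1 x) → ∀ x ∈ Icc l z, 0 < Y x := by
    intro z hz x hx
    have hm : MonotoneOn Y (Icc l z) := by
      apply monotoneOn_of_deriv_nonneg (convex_Icc l z) hcY.continuousOn
      · exact fun y _ => (h1 y).differentiableAt.differentiableWithinAt
      · intro y hy
        rw [interior_Icc] at hy
        rw [(h1 y).deriv]
        exact (hz y ⟨hy.1.le, hy.2⟩).le
    exact lt_of_lt_of_le hl (hm ⟨le_rfl, hx.1.trans hx.2⟩ hx hx.1)
  have main : ∀ x ∈ Icc l r, 0 < Y1 x := by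
    by_contra! hcon
    obtain ⟨x, hx, hxn⟩ := hcon
    set S : Set ℝ := Icc l r ∩ Y1 ⁻¹' (Iic 0) with hS
    have hScl : IsClosed S := isClosed_Icc.inter (isClosed_Iic.preimage hcY1)
    have hSb : BddBelow S := ⟨l, fun y hy => hy.1.1⟩
    have hSne : S.Nonempty := ⟨x, hx, hxn⟩
    have hm := hScl.csInf_mem hSne hSb
    set z := sInf S with hz
    have hz1 : Y1 z ≤ 0 := hm.2
    have hlz : l < z := by
      rcases hm.1.1.lt_or_eq with h | h
      · exact h
      · rw [← h] at hz1; linarith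
    have hpos : ∀ y ∈ Ico l z, 0 < Y1 y := by
      intro y hy
      by_contra! hn
      have : z ≤ y := csInf_le hSb ⟨⟨hy.1, hy.2.le.trans hm.1.2⟩, hn⟩
      linarith [hy.2]
    have hYz : 0 < Y z := key z hpos z ⟨hlz.le, le_rfl⟩
    have hz0 : Y1 z = 0 := by
      refine le_antisymm hz1 ?_
      have : Tendsto Y1 (nhdsWithin z (Iio z)) (nhds (Y1 z)) :=
        hcY1.continuousAt.tendsto.mono_left nhdsWithin_le_nhds
      refine ge_of_tendsto this ?_
      filter_upwards [Ioo_mem_nhdsLT hlz] with y hy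
      exact (hpos y ⟨hy.1.le, hy.2⟩).le
    have hLz := hL z hm.1
    rw [hz0] at hLz
    have hY2 : 0 < Y2 z := by
      have h3 : 0 < a z * Y2 z := by nlinarith [mul_pos hs hYz]
      exact (pos_iff_pos_of_mul_pos h3).1 (ha z hm.1)
    have := (hasDerivAt_iff_tendsto_slope.1 (h2 z)).eventually (lt_mem_nhds hY2)
    have h4 := this.filter_mono (nhdsWithin_mono z (fun y (hy : y ∈ Iio z) => ne_of_lt hy))
    obtain ⟨y, hy, hy2⟩ := (h4.and (Ioo_mem_nhdsLT hlz)).exists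
    rw [slope_def_field, hz0, div_pos_iff] at hy
    have := hpos y ⟨hy2.1.le, hy2.2⟩
    rcases hy with h | h <;> linarith [hy2.2, h.1, h.2]
  intro x hx
  exact ⟨key x (fun y hy => main y ⟨hy.1, hy.2.le.trans hx.2⟩) x ⟨hx.1, le_rfl⟩, main x hx⟩

/-- Continuity of slices. -/
lemma slice_cont (e : ℝ) (F : ℝ → ℝ → ℝ)
    (hF : ContinuousOn (fun p : ℝ × ℝ => F p.1 p.2) (Icc 0 e ×ˢ univ)) (x : ℝ) :
    ContinuousOn (fun t => F t x) (Icc 0 e) :=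
  hF.comp (f := fun t : ℝ => (t, x)) (by fun_prop) (fun t ht => ⟨ht, mem_univ _⟩)

/-- Differentiation under the (weighted) integral sign. -/
lemma diff_int (e s : ℝ) (he : 0 < e) (F F' : ℝ → ℝ → ℝ)
    (hF : ContinuousOn (fun p : ℝ × ℝ => F p.1 p.2) (Icc 0 e ×ˢ univ))
    (hF' : ContinuousOn (fun p : ℝ × ℝ => F' p.1 p.2) (Icc 0 e ×ˢ univ))
    (hd : ∀ t ∈ Icc 0 e, ∀ x, HasDerivAt (fun y => F t y) (F' t x) x) (x : ℝ) :
    HasDerivAt (fun y => ∫ t in (0:ℝ)..e, Real.exp (-s * t) * F t y)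
      (∫ t in (0:ℝ)..e, Real.exp (-s * t) * F' t x) x := by
  have hcont : ∀ (H : ℝ → ℝ → ℝ),
      ContinuousOn (fun p : ℝ × ℝ => H p.1 p.2) (Icc 0 e ×ˢ univ) → ∀ y,
      ContinuousOn (fun t => Real.exp (-s * t) * H t y) (Icc 0 e) := fun H hH y =>
    (by fun_prop : Continuous fun t : ℝ => Real.exp (-s * t)).continuousOn.mul (slice_cont e H hH y)
  have hii : ∀ (H : ℝ → ℝ → ℝ),
      ContinuousOn (fun p : ℝ × ℝ => H p.1 p.2) (Icc 0 e ×ˢ univ) → ∀ y,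
      IntervalIntegrable (fun t => Real.exp (-s * t) * H t y) MeasureTheory.volume 0 e :=
    fun H hH y => (hcont H hH y).intervalIntegrable_of_Icc he.le
  have hK : IsCompact (Icc 0 e ×ˢ Icc (x - 1) (x + 1)) := isCompact_Icc.prod isCompact_Icc
  obtain ⟨C, hC⟩ := hK.exists_bound_of_continuousOn
    (f := fun p : ℝ × ℝ => Real.exp (-s * p.1) * F' p.1 p.2)
    ((by fun_prop : Continuous fun p : ℝ × ℝ => Real.exp (-s * p.1)).continuousOn.mul
      (hF'.mono (prod_mono le_rfl (subset_univ _))))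
  refine (intervalIntegral.hasDerivAt_integral_of_dominated_loc_of_deriv_le
    (F := fun y t => Real.exp (-s * t) * F t y) (F' := fun y t => Real.exp (-s * t) * F' t y)
    (s := Icc (x - 1) (x + 1)) (bound := fun _ => C)
    (Icc_mem_nhds (by linarith) (by linarith)) ?_ (hii F hF x) ?_ ?_ ?_ ?_).2
  · exact Eventually.of_forall fun y => (intervalIntegrable_iff.1 (hii F hF y)).aestronglyMeasurable
  · exact (intervalIntegrable_iff.1 (hii F' hF' x)).aestronglyMeasurable
  · refine Eventually.of_forall fun t ht y hy => ?_
    rw [uIoc_of_le he.le] at ht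
    exact hC (t, y) ⟨⟨ht.1.le, ht.2⟩, hy⟩
  · exact intervalIntegrable_const
  · refine Eventually.of_forall fun t ht y hy => ?_
    rw [uIoc_of_le he.le] at ht
    exact (hd t ⟨ht.1.le, ht.2⟩ y).const_mul _

/-- Analytic part of class `M` that is used: right germs. -/
lemma right_germ (ψ : ℝ → ℝ) (h : PiecewiseAnalytic ψ) (x : ℝ) :
    ∃ g, AnalyticAt ℝ g x ∧ ∀ᶠ y in nhdsWithin x (Ioi x), ψ y = g y := by
  obtain ⟨δ, κ, φ, hδ, hmono, hbot, htop, hgap, han, heq⟩ := h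
  obtain ⟨j, hj, hmax⟩ : ∃ j, κ j ≤ x ∧ ∀ z, κ z ≤ x → z ≤ j := by
    apply Int.exists_greatest_of_bdd
    · obtain ⟨n, hn⟩ := (htop.eventually (eventually_gt_atTop x)).exists
      exact ⟨n, fun z hz => (hmono.lt_iff_lt.1 (hz.trans_lt hn)).le⟩
    · exact (hbot.eventually (eventually_le_atBot x)).exists
  have hj1 : x < κ (j + 1) := by
    by_contra! hh
    have := hmax _ hh
    omega
  obtain ⟨g, -, hg, hga⟩ := (han j x ⟨hj, hj1.le⟩).exists_analyticAt
  refine ⟨g, hga, ?_⟩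
  have hIoo : Ioo x (κ (j + 1)) ∈ nhdsWithin x (Ioi x) := Ioo_mem_nhdsGT hj1
  filter_upwards [hIoo] with y hy
  rw [heq j y ⟨hj.trans hy.1.le, hy.2⟩]
  exact hg (Or.inr ⟨hj.trans hy.1.le, hy.2.le⟩)

lemma left_germ (ψ : ℝ → ℝ) (h : PiecewiseAnalytic ψ) (x : ℝ) :
    ∃ g, AnalyticAt ℝ g x ∧ ∀ᶠ y in nhdsWithin x (Iio x), ψ y = g y := by
  obtain ⟨δ, κ, φ, hδ, hmono, hbot, htop, hgap, han, heq⟩ := h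
  obtain ⟨j, hj, hmax⟩ : ∃ j, κ j < x ∧ ∀ z, κ z < x → z ≤ j := by
    apply Int.exists_greatest_of_bdd
    · obtain ⟨n, hn⟩ := (htop.eventually (eventually_gt_atTop x)).exists
      exact ⟨n, fun z hz => (hmono.lt_iff_lt.1 (hz.trans hn)).le⟩
    · exact (hbot.eventually (eventually_lt_atBot x)).exists
  have hj1 : x ≤ κ (j + 1) := by
    by_contra! hh
    have := hmax _ hh
    omega
  obtain ⟨g, -, hg, hga⟩ := (han j x ⟨hj.le, hj1⟩).exists_analyticAt
  refine ⟨g, hga, ?_⟩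
  have hIoo : Ioo (κ j) x ∈ nhdsWithin x (Iio x) := Ioo_mem_nhdsLT hj
  filter_upwards [hIoo] with y hy
  rw [heq j y ⟨hy.1.le, hy.2.trans_le hj1⟩]
  exact hg (Or.inr ⟨hy.1.le, (hy.2.trans_le hj1).le⟩)

/-- Existence of a large parameter satisfying all the required inequalities. -/
lemma large_param (K k B a1 e c M L l : ℝ) (hk : 0 < k) (he : 0 < e)
    (hc : 0 < c) (hl : 0 < l) (ha1 : a1 * k ^ 2 ≤ 1 / 2) :
    ∃ r : ℝ, 1 < r ∧ 2 ≤ r ^ 2 - B * K * r ∧ a1 * (k * r) ^ 2 + B * (k * r) ≤ r ^ 2 ∧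
      Real.exp (-r ^ 2 * e) ≤ 1 / 2 ∧ -r ^ 2 * e + K * r * L ≤ 0 ∧
      M < c / (4 * r ^ 4) * (Real.exp (k * r * l) - 2) := by
  have E1 : ∀ᶠ r : ℝ in atTop, 1 < r := eventually_gt_atTop 1
  have E2 : ∀ᶠ r : ℝ in atTop, B * K + 2 ≤ r := eventually_ge_atTop _
  have E3 : ∀ᶠ r : ℝ in atTop, 2 * (B * k) ≤ r := eventually_ge_atTop _
  have E4 : ∀ᶠ r : ℝ in atTop, 1 / e ≤ r := eventually_ge_atTop _
  have E5 : ∀ᶠ r : ℝ in atTop, K * L / e ≤ r := eventually_ge_atTop _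
  have hkl : 0 < k * l := mul_pos hk hl
  have E6 : ∀ᶠ r : ℝ in atTop,
      4 * M / (c * (k * l) ^ 4) < (1 * Real.exp (k * l * r) + (-2)) / (k * l * r) ^ 4 :=
    ((Real.tendsto_mul_exp_add_div_pow_atTop 1 (-2) 4 one_pos).comp
      (tendsto_id.const_mul_atTop hkl)).eventually (eventually_gt_atTop _)
  obtain ⟨r, h1, h2, h3, h4, h5, h6⟩ :=
    (E1.and (E2.and (E3.and (E4.and (E5.and E6))))).exists
  have hr : 0 < r := by linarith
  refine ⟨r, h1, by nlinarith, by nlinarith [sq_nonneg r], ?_, ?_, ?_⟩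
  · have h7 : 1 ≤ r * e := by rwa [div_le_iff₀ he] at h4
    have h8 : 1 ≤ r ^ 2 * e := by nlinarith
    have h9 : 1 + 1 ≤ Real.exp (r ^ 2 * e) := by
      linarith [Real.add_one_le_exp (r ^ 2 * e)]
    rw [neg_mul, Real.exp_neg, ← one_div]
    exact one_div_le_one_div_of_le (by norm_num) (by linarith)
  · rw [div_le_iff₀ he] at h5
    nlinarith
  · have h7 : k * r * l = k * l * r := by ring
    rw [h7]
    rw [div_lt_div_iff₀ (by positivity) (by positivity)] at h6
    rw [div_mul_eq_mul_div, lt_div_iff₀ (by positivity)]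
    have h8 : 0 < (k * l) ^ 4 := by positivity
    have h9 : (M * (4 * r ^ 4)) * (k * l) ^ 4 <
        (c * (Real.exp (k * l * r) - 2)) * (k * l) ^ 4 := by
      linarith [h6, mul_pow (k * l) r 4]
    exact lt_of_mul_lt_mul_right h9 h8.le

set_option maxHeartbeats 1000000 in
/-- Analytic core: a Laplace transform in time plus ODE comparison in space. -/
lemma core (e x0 p x1 a0 a1 B c : ℝ) (he : 0 < e) (hp : x0 ≤ p) (hpx : p < x1)
    (ha0 : 0 < a0) (hc : 0 < c) (a b : ℝ → ℝ) (w wt wx wxx G : ℝ → ℝ → ℝ)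
    (ha : ∀ x ∈ Icc x0 x1, a0 ≤ a x ∧ a x ≤ a1) (hb : ∀ x ∈ Icc x0 x1, |b x| ≤ B)
    (cw : ContinuousOn (fun q : ℝ × ℝ => w q.1 q.2) (Icc 0 e ×ˢ univ))
    (cwt : ContinuousOn (fun q : ℝ × ℝ => wt q.1 q.2) (Icc 0 e ×ˢ univ))
    (cwx : ContinuousOn (fun q : ℝ × ℝ => wx q.1 q.2) (Icc 0 e ×ˢ univ))
    (cwxx : ContinuousOn (fun q : ℝ × ℝ => wxx q.1 q.2) (Icc 0 e ×ˢ univ))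
    (cG : ContinuousOn (fun q : ℝ × ℝ => G q.1 q.2) (Icc 0 e ×ˢ univ))
    (dt : ∀ t ∈ Icc 0 e, ∀ x, HasDerivAt (fun s => w s x) (wt t x) t)
    (dx : ∀ t ∈ Icc 0 e, ∀ x, HasDerivAt (fun y => w t y) (wx t x) x)
    (dxx : ∀ t ∈ Icc 0 e, ∀ x, HasDerivAt (fun y => wx t y) (wxx t x) x)
    (pde : ∀ t ∈ Icc 0 e, ∀ x, wt t x = a x * wxx t x + b x * wx t x + G t x)
    (G0 : ∀ t ∈ Icc 0 e, ∀ x ∈ Icc x0 x1, 0 ≤ G t x)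
    (Gc : ∀ t ∈ Icc 0 e, ∀ x ∈ Icc p x1, c ≤ G t x)
    (w0 : ∀ x, w 0 x = 0)
    (wl : ∀ t ∈ Icc 0 e, w t x0 = 0) (wxl : ∀ t ∈ Icc 0 e, wx t x0 = 0) : False := by
  have hx01 : x0 < x1 := hp.trans_lt hpx
  have ha1 : 0 < a1 := by
    have := ha x0 ⟨le_rfl, hx01.le⟩
    linarith [this.1, this.2]
  have hB : 0 ≤ B := (abs_nonneg _).trans (hb x0 ⟨le_rfl, hx01.le⟩)
  -- a bound on w
  have hK : IsCompact (Icc 0 e ×ˢ Icc x0 x1) := isCompact_Icc.prod isCompact_Icc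
  obtain ⟨M0, hM0⟩ := hK.exists_bound_of_continuousOn
    (cw.mono (prod_mono le_rfl (subset_univ _)))
  obtain ⟨M, hMpos, hM⟩ : ∃ M : ℝ, 0 < M ∧ ∀ t ∈ Icc 0 e, ∀ x ∈ Icc x0 x1, |w t x| ≤ M := by
    refine ⟨max M0 1, by positivity, fun t ht x hx => ?_⟩
    exact (hM0 (t, x) ⟨ht, hx⟩).trans (le_max_left _ _)
  -- parameters
  set K : ℝ := Real.sqrt (2 / a0) with hKdef
  have hK2 : a0 * K ^ 2 = 2 := by
    rw [hKdef, Real.sq_sqrt (by positivity)]; field_simp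
  have hKpos : 0 < K := Real.sqrt_pos.2 (by positivity)
  set k : ℝ := Real.sqrt (1 / (2 * a1)) with hkdef
  have hk2 : a1 * k ^ 2 = 1 / 2 := by
    rw [hkdef, Real.sq_sqrt (by positivity)]; field_simp
  have hkpos : 0 < k := Real.sqrt_pos.2 (by positivity)
  obtain ⟨r, hr1, hrK, hrk, hre, hrL, hrfin⟩ :=
    large_param K k B a1 e (c / 2) (M * e + M) (x1 - x0) (x1 - p) hkpos he (by positivity)
      (by linarith) hk2.le
  have hr : 0 < r := by linarith
  set s : ℝ := r ^ 2 with hsdef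
  have hs : 0 < s := by positivity
  -- Laplace transforms
  set V : ℝ → ℝ := fun x => -∫ t in (0:ℝ)..e, Real.exp (-s * t) * w t x with hV
  set V1 : ℝ → ℝ := fun x => -∫ t in (0:ℝ)..e, Real.exp (-s * t) * wx t x with hV1
  set V2 : ℝ → ℝ := fun x => -∫ t in (0:ℝ)..e, Real.exp (-s * t) * wxx t x with hV2
  set I : ℝ → ℝ := fun x => ∫ t in (0:ℝ)..e, Real.exp (-s * t) * G t x with hI
  have dV : ∀ x, HasDerivAt V (V1 x) x := fun x => (diff_int e s he w wx cw cwx dx x).neg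
  have dV1 : ∀ x, HasDerivAt V1 (V2 x) x := fun x => (diff_int e s he wx wxx cwx cwxx dxx x).neg
  have hii : ∀ (H : ℝ → ℝ → ℝ),
      ContinuousOn (fun p : ℝ × ℝ => H p.1 p.2) (Icc 0 e ×ˢ univ) → ∀ y,
      IntervalIntegrable (fun t => Real.exp (-s * t) * H t y) MeasureTheory.volume 0 e :=
    fun H hH y => ((by fun_prop : Continuous fun t : ℝ => Real.exp (-s * t)).continuousOn.mul
      (slice_cont e H hH y)).intervalIntegrable_of_Icc he.le
  have hparts : ∀ x, ∫ t in (0:ℝ)..e, Real.exp (-s * t) * wt t x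
      = Real.exp (-s * e) * w e x - s * V x := by
    intro x
    have hder : ∀ t ∈ uIcc 0 e, HasDerivAt (fun t => Real.exp (-s * t) * w t x)
        (Real.exp (-s * t) * wt t x - s * (Real.exp (-s * t) * w t x)) t := by
      intro t ht
      rw [uIcc_of_le he.le] at ht
      have h1 : HasDerivAt (fun t : ℝ => Real.exp (-s * t)) (Real.exp (-s * t) * (-s * 1)) t :=
        ((hasDerivAt_id t).const_mul (-s)).exp
      refine (h1.mul (dt t ht x)).congr_deriv ?_
      ring
    have h2 := intervalIntegral.integral_eq_sub_of_hasDerivAt hder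
      ((hii wt cwt x).sub ((hii w cw x).const_mul s))
    rw [intervalIntegral.integral_sub (hii wt cwt x) ((hii w cw x).const_mul s),
      intervalIntegral.integral_const_mul, w0] at h2
    simp only [hV]
    linarith
  have hode : ∀ x, a x * V2 x + b x * V1 x - s * V x
      = I x - Real.exp (-s * e) * w e x := by
    intro x
    have h1 : ∫ t in (0:ℝ)..e, Real.exp (-s * t) * wt t x
        = ∫ t in (0:ℝ)..e, (a x * (Real.exp (-s * t) * wxx t x)
          + b x * (Real.exp (-s * t) * wx t x) + Real.exp (-s * t) * G t x) := by
      apply intervalIntegral.integral_congr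
      intro t ht
      rw [uIcc_of_le he.le] at ht
      simp only [pde t ht x]
      ring
    rw [intervalIntegral.integral_add
      (((hii wxx cwxx x).const_mul _).add ((hii wx cwx x).const_mul _)) (hii G cG x),
      intervalIntegral.integral_add ((hii wxx cwxx x).const_mul _) ((hii wx cwx x).const_mul _),
      intervalIntegral.integral_const_mul, intervalIntegral.integral_const_mul, hparts x] at h1
    simp only [hV1, hV2, hI]
    linarith
  have hVl : V x0 = 0 := by
    simp only [hV]
    rw [intervalIntegral.integral_congr (g := fun _ => (0:ℝ))]
    · simp
    · intro t ht
      rw [uIcc_of_le he.le] at ht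
      simp [wl t ht]
  have hV1l : V1 x0 = 0 := by
    simp only [hV1]
    rw [intervalIntegral.integral_congr (g := fun _ => (0:ℝ))]
    · simp
    · intro t ht
      rw [uIcc_of_le he.le] at ht
      simp [wxl t ht]
  have hI0 : ∀ x ∈ Icc x0 x1, 0 ≤ I x := fun x hx =>
    intervalIntegral.integral_nonneg he.le fun t ht => mul_nonneg (Real.exp_pos _).le (G0 t ht x hx)
  have hIc : ∀ x ∈ Icc p x1, c / 2 / s ≤ I x := by
    intro x hx
    have hcexp : IntervalIntegrable (fun t => Real.exp (-s * t) * c) MeasureTheory.volume 0 e :=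
      (by fun_prop : Continuous fun t : ℝ => Real.exp (-s * t) * c).intervalIntegrable _ _
    have h1 : ∫ t in (0:ℝ)..e, Real.exp (-s * t) * c ≤ I x :=
      intervalIntegral.integral_mono_on he.le hcexp (hii G cG x) fun t ht =>
        mul_le_mul_of_nonneg_left (Gc t ht x hx) (Real.exp_pos _).le
    have h2 : ∫ t in (0:ℝ)..e, Real.exp (-s * t) * c = c * (1 - Real.exp (-s * e)) / s := by
      have hder : ∀ t ∈ uIcc 0 e, HasDerivAt (fun t => -(Real.exp (-s * t) * c) / s)
          (Real.exp (-s * t) * c) t := by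
        intro t ht
        have h1 : HasDerivAt (fun t : ℝ => Real.exp (-s * t)) (Real.exp (-s * t) * (-s * 1)) t :=
          ((hasDerivAt_id t).const_mul (-s)).exp
        refine (((h1.mul_const c).neg).div_const s).congr_deriv ?_
        field_simp
      rw [intervalIntegral.integral_eq_sub_of_hasDerivAt hder hcexp]
      simp
      ring
    have h3 : c / 2 ≤ c * (1 - Real.exp (-s * e)) := by nlinarith
    calc c / 2 / s ≤ c * (1 - Real.exp (-s * e)) / s := by gcongr
      _ ≤ I x := by rw [← h2]; exact h1
  -- first comparison
  set d : ℝ := M * Real.exp (-s * e) with hd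
  have hdpos : 0 < d := by positivity
  have hwe : ∀ x ∈ Icc x0 x1, -d ≤ -(Real.exp (-s * e) * w e x) := by
    intro x hx
    have := (abs_le.1 (hM e ⟨he.le, le_rfl⟩ x hx)).2
    have h2 := mul_le_mul_of_nonneg_left this (Real.exp_pos (-s * e)).le
    rw [hd]; linarith
  set lam : ℝ := K * r with hlam
  have hlampos : 0 < lam := by positivity
  have hlam2 : ∀ x ∈ Icc x0 x1, 2 ≤ a x * lam ^ 2 + b x * lam - s := by
    intro x hx
    have h1 : a0 * lam ^ 2 ≤ a x * lam ^ 2 :=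
      mul_le_mul_of_nonneg_right (ha x hx).1 (by positivity)
    have h2 : -B * lam ≤ b x * lam :=
      mul_le_mul_of_nonneg_right (abs_le.1 (hb x hx)).1 hlampos.le
    have h3 : a0 * lam ^ 2 = 2 * s := by
      rw [hlam, mul_pow, ← mul_assoc, hK2]
    have h4 : B * lam = B * K * r := by rw [hlam]; ring
    linarith
  set Y : ℝ → ℝ := fun x => V x + d * Real.exp (lam * (x - x0)) with hY
  set Y1 : ℝ → ℝ := fun x => V1 x + d * (lam * Real.exp (lam * (x - x0))) with hY1
  set Y2 : ℝ → ℝ := fun x => V2 x + d * (lam ^ 2 * Real.exp (lam * (x - x0))) with hY2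
  have dexp : ∀ (m z x : ℝ), HasDerivAt (fun y => Real.exp (m * (y - z)))
      (m * Real.exp (m * (x - z))) x := by
    intro m z x
    have := (((hasDerivAt_id x).sub_const z).const_mul m).exp
    refine this.congr_deriv ?_
    simp only [id]; ring
  have dY : ∀ x, HasDerivAt Y (Y1 x) x := fun x => (dV x).add ((dexp lam x0 x).const_mul d)
  have dY1 : ∀ x, HasDerivAt Y1 (Y2 x) x := by
    intro x
    refine ((dV1 x).add (((dexp lam x0 x).const_mul lam).const_mul d)).congr_deriv ?_
    simp only [hY2]; ring
  have hYL : ∀ x ∈ Icc x0 x1, I x < a x * Y2 x + b x * Y1 x - s * Y x := by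
    intro x hx
    have h1 : a x * Y2 x + b x * Y1 x - s * Y x = (a x * V2 x + b x * V1 x - s * V x)
        + d * ((a x * lam ^ 2 + b x * lam - s) * Real.exp (lam * (x - x0))) := by
      simp only [hY, hY1, hY2]; ring
    have h2 : 1 ≤ Real.exp (lam * (x - x0)) :=
      Real.one_le_exp (mul_nonneg hlampos.le (by linarith [hx.1]))
    have h3 : 2 ≤ (a x * lam ^ 2 + b x * lam - s) * Real.exp (lam * (x - x0)) := by
      nlinarith [hlam2 x hx]
    have h4 := mul_le_mul_of_nonneg_left h3 hdpos.le
    rw [h1, hode x]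
    linarith [hwe x hx]
  have hapos : ∀ x ∈ Icc x0 x1, 0 < a x := fun x hx => ha0.trans_le (ha x hx).1
  have hYpos := ivp_cmp x0 x1 s a b Y Y1 Y2 hs dY dY1 hapos
    (fun x hx => (hI0 x hx).trans_lt (hYL x hx))
    (by simp only [hY, hVl]; simpa using hdpos)
    (by simp only [hY1, hV1l]; simp; positivity)
  -- second comparison
  have hsub : Icc p x1 ⊆ Icc x0 x1 := Icc_subset_Icc_left hp
  set mu : ℝ := k * r with hmu
  have hmupos : 0 < mu := by positivity
  set q : ℝ := c / 2 / (4 * r ^ 4) with hq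
  have hqpos : 0 < q := by positivity
  set D : ℝ → ℝ := fun x => Y x - q * (Real.exp (mu * (x - p)) + Real.exp (-mu * (x - p)) - 2)
    with hD
  set D1 : ℝ → ℝ := fun x => Y1 x
    - q * (mu * Real.exp (mu * (x - p)) + -mu * Real.exp (-mu * (x - p))) with hD1
  set D2 : ℝ → ℝ := fun x => Y2 x
    - q * (mu * (mu * Real.exp (mu * (x - p))) + -mu * (-mu * Real.exp (-mu * (x - p)))) with hD2
  have dD : ∀ x, HasDerivAt D (D1 x) x := fun x =>
    (dY x).sub ((((dexp mu p x).add (dexp (-mu) p x)).sub_const 2).const_mul q)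
  have dD1 : ∀ x, HasDerivAt D1 (D2 x) x := fun x =>
    (dY1 x).sub ((((dexp mu p x).const_mul mu).add ((dexp (-mu) p x).const_mul (-mu))).const_mul q)
  have hDpos := ivp_cmp p x1 s a b D D1 D2 hs dD dD1 (fun x hx => hapos x (hsub hx)) (by
      intro x hx
      have h0 := hsub hx
      have hE1 := Real.exp_pos (mu * (x - p))
      have hE2 := Real.exp_pos (-mu * (x - p))
      set E1 := Real.exp (mu * (x - p)) with hE1d
      set E2 := Real.exp (-mu * (x - p)) with hE2d
      have h1 : a x * D2 x + b x * D1 x - s * D x = (a x * Y2 x + b x * Y1 x - s * Y x)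
          - q * ((a x * mu ^ 2 + b x * mu - s) * E1 + (a x * mu ^ 2 - b x * mu - s) * E2
            + 2 * s) := by
        simp only [hD, hD1, hD2]; ring
      have h2 : a x * mu ^ 2 ≤ a1 * mu ^ 2 :=
        mul_le_mul_of_nonneg_right (ha x h0).2 (by positivity)
      have h3 : b x * mu ≤ B * mu :=
        mul_le_mul_of_nonneg_right (abs_le.1 (hb x h0)).2 hmupos.le
      have h4 : -B * mu ≤ b x * mu :=
        mul_le_mul_of_nonneg_right (abs_le.1 (hb x h0)).1 hmupos.le
      have h5 : (a x * mu ^ 2 + b x * mu - s) * E1 ≤ 0 :=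
        mul_nonpos_of_nonpos_of_nonneg (by linarith) hE1.le
      have h6 : (a x * mu ^ 2 - b x * mu - s) * E2 ≤ 0 :=
        mul_nonpos_of_nonpos_of_nonneg (by linarith) hE2.le
      have h7 : q * ((a x * mu ^ 2 + b x * mu - s) * E1 + (a x * mu ^ 2 - b x * mu - s) * E2
            + 2 * s) ≤ q * (2 * s) := mul_le_mul_of_nonneg_left (by linarith) hqpos.le
      have h8 : q * (2 * s) = c / 2 / s / 2 := by
        rw [hq, hsdef]; field_simp; norm_num
      have h9 : 0 < c / 2 / s := by positivity
      rw [h1]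
      linarith [hYL x h0, hIc x hx])
    (by simp only [hD]; norm_num; exact (hYpos p ⟨hp, hpx.le⟩).1)
    (by simp only [hD1]; norm_num; exact (hYpos p ⟨hp, hpx.le⟩).2)
  have hfin := (hDpos x1 ⟨hpx.le, le_rfl⟩).1
  have hVb : V x1 ≤ M * e := by
    have h1 : ‖∫ t in (0:ℝ)..e, Real.exp (-s * t) * w t x1‖ ≤ M * |e - 0| := by
      apply intervalIntegral.norm_integral_le_of_norm_le_const
      intro t ht
      rw [uIoc_of_le he.le] at ht
      have h2 := hM t ⟨ht.1.le, ht.2⟩ x1 ⟨hx01.le, le_rfl⟩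
      have h3 : Real.exp (-s * t) ≤ 1 := Real.exp_le_one_iff.2 (by
        have := mul_pos hs ht.1
        linarith)
      rw [norm_mul, Real.norm_eq_abs, Real.norm_eq_abs, abs_of_pos (Real.exp_pos _)]
      calc Real.exp (-s * t) * |w t x1| ≤ 1 * |w t x1| :=
            mul_le_mul_of_nonneg_right h3 (abs_nonneg _)
        _ ≤ M := by linarith
    rw [sub_zero, abs_of_pos he] at h1
    exact (neg_le_abs _).trans h1
  have hZb : d * Real.exp (lam * (x1 - x0)) ≤ M := by
    rw [hd, mul_assoc, ← Real.exp_add]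
    have : Real.exp (-s * e + lam * (x1 - x0)) ≤ 1 := Real.exp_le_one_iff.2 hrL
    calc M * Real.exp (-s * e + lam * (x1 - x0)) ≤ M * 1 := mul_le_mul_of_nonneg_left this hMpos.le
      _ = M := mul_one M
  have hE := Real.exp_pos (-mu * (x1 - p))
  have hqE := mul_pos hqpos hE
  simp only [hD, hY] at hfin
  linarith

/-- Localisation: no sign change of the drift difference is possible. -/
lemma no_sign (T : ℝ) (sigma b bt : ℝ → ℝ)
    (hsc : Continuous sigma) (hspos : ∀ x, 0 < sigma x)
    (hb : Continuous b) (hbt : Continuous bt)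
    (f : ℝ → ℝ) (hf : Continuous (deriv f)) (hfd : ∀ x, deriv f x ≠ 0)
    (u ut : ℝ → ℝ → ℝ)
    (hu : IsClassicalSolution T b sigma f u)
    (hut : IsClassicalSolution T bt sigma f ut)
    (ε : ℝ) (hε : ε ∈ Ioo 0 T)
    (ω : Set ℝ) (hω : IsOpen ω) (x0 x1 : ℝ) (hx0 : x0 ∈ ω) (hx01 : x0 < x1)
    (hobs : ∀ t ∈ Ioo 0 ε, ∀ x ∈ ω, u t x = ut t x)
    (h0 : ∀ x ∈ Icc x0 x1, 0 ≤ (b x - bt x) * deriv f x)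
    (h1 : 0 < (b x1 - bt x1) * deriv f x1) : False := by
  obtain ⟨cu, dut, dux, duxx, cut, cux, cuxx, upde, u0⟩ := hu
  obtain ⟨cv, dvt, dvx, dvxx, cvt, cvx, cvxx, vpde, v0⟩ := hut
  obtain ⟨hε0, hεT⟩ := hε
  set N : ℝ × ℝ → ℝ := fun p => deriv (fun y => ut p.1 y) p.2 with hN
  have hN0 : ∀ x, N (0, x) = deriv f x := by
    intro x
    have : (fun y => ut 0 y) = f := funext v0
    simp only [hN, this]
  set cl : ℝ × ℝ → ℝ × ℝ := fun p => (max 0 (min p.1 ε), p.2) with hcl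
  have hclc : Continuous cl := by fun_prop
  have hNc : Continuous (fun p => N (cl p)) := by
    refine ContinuousOn.comp_continuous cvx hclc fun p => ⟨⟨le_max_left _ _, ?_⟩, mem_univ _⟩
    exact max_lt (hε0.trans hεT) ((min_le_right _ _).trans_lt hεT)
  have hcl0 : ∀ t ∈ Icc 0 ε, ∀ x, cl (t, x) = (t, x) := by
    intro t ht x
    simp only [hcl, min_eq_left ht.2, max_eq_right ht.1]
  have h0m : (0:ℝ) ∈ Icc 0 ε := ⟨le_rfl, hε0.le⟩
  -- positivity of the derivative product near t = 0
  have hPc : Continuous (fun p : ℝ × ℝ => N (cl p) * deriv f p.2) :=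
    hNc.mul (hf.comp continuous_snd)
  obtain ⟨U, W, hU, -, hU0, hW, hUW⟩ := generalized_tube_lemma (s := {(0:ℝ)}) (t := Icc x0 x1)
    isCompact_singleton isCompact_Icc (n := {p : ℝ × ℝ | 0 < N (cl p) * deriv f p.2})
    (isOpen_lt continuous_const hPc) (by
      rintro ⟨t, x⟩ ⟨ht, hx⟩
      have ht : t = 0 := ht
      subst ht
      simp only [mem_setOf_eq, hcl0 0 h0m, hN0]
      exact mul_self_pos.2 (hfd x))
  obtain ⟨η1, hη1, hη1U⟩ := Metric.isOpen_iff.1 hU 0 (hU0 rfl)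
  -- lower bound near (0, x1)
  set c : ℝ := (b x1 - bt x1) * deriv f x1 / 2 with hc
  have hGc : Continuous (fun p : ℝ × ℝ => (b p.2 - bt p.2) * N (cl p)) :=
    ((hb.comp continuous_snd).sub (hbt.comp continuous_snd)).mul hNc
  have hop : IsOpen {p : ℝ × ℝ | c < (b p.2 - bt p.2) * N (cl p)} :=
    isOpen_lt continuous_const hGc
  obtain ⟨η2, hη2, hη2U⟩ := Metric.isOpen_iff.1 hop (0, x1) (by
    simp only [mem_setOf_eq, hcl0 0 h0m, hN0, hc]; linarith)
  set e : ℝ := min (ε / 2) (min (η1 / 2) (η2 / 2)) with he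
  have hepos : 0 < e := by positivity
  have he1 : e ≤ ε / 2 := min_le_left _ _
  have he2 : e ≤ η1 / 2 := (min_le_right _ _).trans (min_le_left _ _)
  have he3 : e ≤ η2 / 2 := (min_le_right _ _).trans (min_le_right _ _)
  have hsubε : ∀ t ∈ Icc 0 e, t ∈ Icc 0 ε := fun t ht => ⟨ht.1, by linarith [ht.2]⟩
  have hsubT : ∀ t ∈ Icc 0 e, t ∈ Ico 0 T := fun t ht => ⟨ht.1, by linarith [ht.2]⟩
  have hsub : Icc 0 e ×ˢ (univ : Set ℝ) ⊆ Ico 0 T ×ˢ univ := prod_mono hsubT le_rfl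
  have hweq : ∀ t ∈ Icc 0 e, ∀ x ∈ ω, u t x = ut t x := by
    intro t ht x hx
    rcases ht.1.eq_or_lt with h | h
    · rw [← h, u0, v0]
    · exact hobs t ⟨h, by linarith [ht.2]⟩ x hx
  -- coefficient bounds
  have hac : Continuous fun x => (1 / 2) * (sigma x) ^ 2 := by fun_prop
  have hne : (Icc x0 x1).Nonempty := ⟨x0, le_rfl, hx01.le⟩
  obtain ⟨xm, -, hxm⟩ := isCompact_Icc.exists_isMinOn hne hac.continuousOn
  obtain ⟨xM, -, hxM⟩ := isCompact_Icc.exists_isMaxOn hne hac.continuousOn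
  obtain ⟨B, hB⟩ := isCompact_Icc.exists_bound_of_continuousOn (s := Icc x0 x1) hb.continuousOn
  set p : ℝ := max x0 (x1 - η2 / 2) with hp
  have hps := hspos xm
  refine core e x0 p x1 ((1 / 2) * (sigma xm) ^ 2) ((1 / 2) * (sigma xM) ^ 2) B c hepos
    (le_max_left _ _) (max_lt hx01 (by linarith)) (by positivity) (by rw [hc]; linarith)
    (fun x => (1 / 2) * (sigma x) ^ 2) b
    (fun t x => u t x - ut t x)
    (fun t x => deriv (fun s => u s x) t - deriv (fun s => ut s x) t)
    (fun t x => deriv (fun y => u t y) x - deriv (fun y => ut t y) x)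
    (fun t x => deriv (deriv (fun y => u t y)) x - deriv (deriv (fun y => ut t y)) x)
    (fun t x => (b x - bt x) * N (t, x))
    (fun x hx => ⟨hxm hx, hxM hx⟩) hB
    ((cu.sub cv).mono hsub) ((cut.sub cvt).mono hsub) ((cux.sub cvx).mono hsub)
    ((cuxx.sub cvxx).mono hsub) ?_ ?_ ?_ ?_ ?_ ?_ ?_ ?_ ?_ ?_
  · exact (((hb.comp continuous_snd).sub (hbt.comp continuous_snd)).continuousOn.mul cvx).mono hsub
  · exact fun t ht x => (dut t (hsubT t ht) x).hasDerivAt.sub (dvt t (hsubT t ht) x).hasDerivAt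
  · exact fun t ht x => (dux t (hsubT t ht) x).hasDerivAt.sub (dvx t (hsubT t ht) x).hasDerivAt
  · exact fun t ht x => (duxx t (hsubT t ht) x).hasDerivAt.sub (dvxx t (hsubT t ht) x).hasDerivAt
  · intro t ht x
    simp only [upde t (hsubT t ht) x, vpde t (hsubT t ht) x, hN]
    ring
  · intro t ht x hx
    have hm : (t, x) ∈ U ×ˢ W := by
      refine ⟨hη1U ?_, hW hx⟩
      rw [Metric.mem_ball, Real.dist_eq, sub_zero, abs_of_nonneg ht.1]
      linarith [ht.2]
    have h2 : 0 < N (cl (t, x)) * deriv f x := hUW hm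
    rw [hcl0 t (hsubε t ht)] at h2
    have h3 : 0 < deriv f x ^ 2 := by have := hfd x; positivity
    have h4 : 0 ≤ ((b x - bt x) * N (t, x)) * deriv f x ^ 2 := by
      have := mul_nonneg (h0 x hx) h2.le
      linarith
    exact nonneg_of_mul_nonneg_left h4 h3
  · intro t ht x hx
    have hxl : x1 - η2 / 2 ≤ x := (le_max_right _ _).trans hx.1
    have h2 : (t, x) ∈ Metric.ball ((0:ℝ), x1) η2 := by
      rw [Metric.mem_ball, Prod.dist_eq, max_lt_iff]
      simp only [Real.dist_eq]
      exact ⟨abs_lt.2 ⟨by linarith [ht.1], by linarith [ht.2]⟩,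
        abs_lt.2 ⟨by linarith, by linarith [hx.2]⟩⟩
    have h3 : c < (b x - bt x) * N (cl (t, x)) := hη2U h2
    rw [hcl0 t (hsubε t ht)] at h3
    exact h3.le
  · intro x
    simp only [u0, v0, sub_self]
  · intro t ht
    simp only [hweq t ht x0 hx0, sub_self]
  · intro t ht
    have : (fun y => u t y) =ᶠ[nhds x0] (fun y => ut t y) := by
      filter_upwards [hω.mem_nhds hx0] with y hy using hweq t ht y hy
    simp only [this.deriv_eq, sub_self]

/-- A continuous function keeps its sign between zeros. -/
lemma keep_sign (P : ℝ → ℝ) (hP : Continuous P) (x0 z x1 : ℝ)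
    (h0 : ∀ x ∈ Ico x0 z, P x = 0) (h1 : ∀ x ∈ Ioc z x1, P x ≠ 0) (hpos : 0 < P x1) :
    ∀ x ∈ Icc x0 x1, 0 ≤ P x := by
  intro x hx
  by_contra! hn
  have hzx : z ≤ x := by
    by_contra! h
    linarith [h0 x ⟨hx.1, h⟩]
  obtain ⟨y, hy, hy0⟩ := intermediate_value_Icc hx.2 hP.continuousOn
    (show (0:ℝ) ∈ Icc (P x) (P x1) from ⟨hn.le, hpos.le⟩)
  have hxy : x < y := by
    rcases hy.1.eq_or_lt with h | h
    · rw [← h] at hy0; linarith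
    · exact h
  exact h1 y ⟨hzx.trans_lt hxy, hy.2⟩ hy0

lemma right_ext (T : ℝ) (sigma b bt : ℝ → ℝ)
    (hsc : Continuous sigma) (hspos : ∀ x, 0 < sigma x)
    (hb : Continuous b) (hbt : Continuous bt)
    (gb : ∀ x, ∃ g, AnalyticAt ℝ g x ∧ ∀ᶠ y in nhdsWithin x (Ioi x), b y = g y)
    (gbt : ∀ x, ∃ g, AnalyticAt ℝ g x ∧ ∀ᶠ y in nhdsWithin x (Ioi x), bt y = g y)
    (f : ℝ → ℝ) (hf : Continuous (deriv f)) (hfd : ∀ x, deriv f x ≠ 0)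
    (u ut : ℝ → ℝ → ℝ)
    (hu : IsClassicalSolution T b sigma f u)
    (hut : IsClassicalSolution T bt sigma f ut)
    (ε : ℝ) (hε : ε ∈ Ioo 0 T)
    (ω : Set ℝ) (hω : IsOpen ω) (x0 : ℝ) (hx0 : x0 ∈ ω)
    (hobs : ∀ t ∈ Ioo 0 ε, ∀ x ∈ ω, u t x = ut t x) :
    ∀ x, x0 ≤ x → b x = bt x := by
  by_contra! hcon
  set S : Set ℝ := {x | x0 ≤ x ∧ b x ≠ bt x} with hS
  have hSne : S.Nonempty := hcon
  have hSb : BddBelow S := ⟨x0, fun y hy => hy.1⟩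
  set z := sInf S with hz
  have hx0z : x0 ≤ z := le_csInf hSne fun y hy => hy.1
  have hlt : ∀ x ∈ Ico x0 z, b x = bt x := by
    intro x hx
    by_contra! h
    have : z ≤ x := csInf_le hSb ⟨hx.1, h⟩
    linarith [hx.2]
  obtain ⟨g, hg, hge⟩ := gb z
  obtain ⟨gt, hgt, hgte⟩ := gbt z
  have hGT : Ioi z ⊆ {z}ᶜ := fun y hy => ne_of_gt hy
  rcases (hg.sub hgt).eventually_eq_zero_or_eventually_ne_zero with h | h
  · have h2 : ∀ᶠ y in nhdsWithin z (Ioi z), b y = bt y := by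
      filter_upwards [hge, hgte, nhdsWithin_le_nhds h] with y h1 h2 h3
      rw [h1, h2]
      exact sub_eq_zero.1 h3
    obtain ⟨y, hy, hys⟩ := (mem_nhdsGT_iff_exists_Ioo_subset (a := z)).1 h2
    have hy : z < y := hy
    have hzz : b z = bt z := by
      refine tendsto_nhds_unique_of_eventuallyEq (l := nhdsWithin z (Ioi z))
        (hb.continuousAt.tendsto.mono_left nhdsWithin_le_nhds)
        (hbt.continuousAt.tendsto.mono_left nhdsWithin_le_nhds) h2
    have : y ≤ z := by
      refine le_csInf hSne fun x hx => ?_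
      by_contra! hxy
      apply hx.2
      rcases lt_trichotomy x z with h | h | h
      · exact hlt x ⟨hx.1, h⟩
      · rw [h, hzz]
      · exact hys ⟨h, hxy⟩
    linarith
  · have h2 : ∀ᶠ y in nhdsWithin z (Ioi z), b y ≠ bt y := by
      filter_upwards [hge, hgte, nhdsWithin_mono z hGT h] with y h1 h2 h3
      rw [h1, h2]
      exact sub_ne_zero.1 h3
    obtain ⟨y, hy, hys⟩ := (mem_nhdsGT_iff_exists_Ioo_subset (a := z)).1 h2
    have hy : z < y := hy
    set x1 := (z + y) / 2 with hx1
    have hzx1 : z < x1 := by rw [hx1]; linarith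
    have hx1y : x1 < y := by rw [hx1]; linarith
    have hne : ∀ x ∈ Ioc z x1, b x ≠ bt x := fun x hx => hys ⟨hx.1, hx.2.trans_lt hx1y⟩
    have hx01 : x0 < x1 := hx0z.trans_lt hzx1
    have hne1 := hne x1 ⟨hzx1, le_rfl⟩
    have hPne : (b x1 - bt x1) * deriv f x1 ≠ 0 := mul_ne_zero (sub_ne_zero.2 hne1) (hfd x1)
    rcases lt_or_gt_of_ne hPne with hs | hs
    · have hs' : 0 < (bt x1 - b x1) * deriv f x1 := by linarith
      refine no_sign T sigma bt b hsc hspos hbt hb f hf hfd ut u hut hu ε hε ω hω x0 x1 hx0 hx01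
        (fun t ht x hx => (hobs t ht x hx).symm) ?_ hs'
      exact keep_sign (fun x => (bt x - b x) * deriv f x) ((hbt.sub hb).mul hf) x0 z x1
        (fun x hx => by simp [hlt x hx])
        (fun x hx => mul_ne_zero (sub_ne_zero.2 (hne x hx).symm) (hfd x)) hs'
    · refine no_sign T sigma b bt hsc hspos hb hbt f hf hfd u ut hu hut ε hε ω hω x0 x1 hx0 hx01
        hobs ?_ hs
      exact keep_sign (fun x => (b x - bt x) * deriv f x) ((hb.sub hbt).mul hf) x0 z x1
        (fun x hx => by simp [hlt x hx])
        (fun x hx => mul_ne_zero (sub_ne_zero.2 (hne x hx)) (hfd x)) hs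

/-- Reflection of a classical solution. -/
lemma reflect_sol (T : ℝ) (b sigma f : ℝ → ℝ) (u : ℝ → ℝ → ℝ)
    (hu : IsClassicalSolution T b sigma f u) :
    IsClassicalSolution T (fun x => -b (-x)) (fun x => sigma (-x)) (fun x => f (-x))
      (fun t x => u t (-x)) := by
  obtain ⟨cu, dut, dux, duxx, cut, cux, cuxx, upde, u0⟩ := hu
  have e1 : ∀ t, deriv (fun y => u t (-y)) = fun x => -deriv (fun y => u t y) (-x) :=
    fun t => funext fun x => deriv_comp_neg (fun y => u t y) x
  have e2 : ∀ t x, deriv (deriv (fun y => u t (-y))) x = deriv (deriv (fun y => u t y)) (-x) := by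
    intro t x
    rw [e1, deriv.fun_neg, deriv_comp_neg (deriv fun y => u t y) x, neg_neg]
  have cn : ContinuousOn (fun p : ℝ × ℝ => (p.1, -p.2)) (Ico 0 T ×ˢ univ) := by fun_prop
  have mn : MapsTo (fun p : ℝ × ℝ => (p.1, -p.2)) (Ico 0 T ×ˢ univ) (Ico 0 T ×ˢ univ) :=
    fun p hp => ⟨hp.1, mem_univ _⟩
  refine ⟨cu.comp cn mn, fun t ht x => dut t ht (-x), fun t ht x => ?_, fun t ht x => ?_,
    cut.comp cn mn, ?_, ?_, fun t ht x => ?_, fun x => u0 (-x)⟩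
  · exact (dux t ht (-x)).comp x differentiable_neg.differentiableAt
  · simp only [e1]
    exact ((duxx t ht (-x)).comp x differentiable_neg.differentiableAt).neg
  · simp only [e1]
    exact (cux.comp cn mn).neg
  · simp only [e2]
    exact cuxx.comp cn mn
  · simp only [e2]
    rw [e1, upde t ht (-x)]
    ring

lemma reflect_germ (ψ : ℝ → ℝ)
    (h : ∀ x, ∃ g, AnalyticAt ℝ g x ∧ ∀ᶠ y in nhdsWithin x (Iio x), ψ y = g y) (x : ℝ) :
    ∃ g, AnalyticAt ℝ g x ∧ ∀ᶠ y in nhdsWithin x (Ioi x), -ψ (-y) = g y := by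
  obtain ⟨g, hg, hge⟩ := h (-x)
  refine ⟨fun y => -g (-y), (hg.comp_of_eq (analyticAt_id.neg) rfl).neg, ?_⟩
  have ht : Tendsto (fun y : ℝ => -y) (nhdsWithin x (Ioi x)) (nhdsWithin (-x) (Iio (-x))) :=
    tendsto_neg_nhdsGT
  filter_upwards [ht.eventually hge] with y hy
  rw [hy]

/-- Theorem 1: with known diffusion coefficient, the drift is uniquely determined by
observation of the solution on a small time-space cylinder. -/
theorem drift_uniqueness
    (T : ℝ) (hT : 0 < T)
    (sigma b bt : ℝ → ℝ)
    (hsLip : ∃ K, LipschitzWith K sigma) (hspos : ∀ x, 0 < sigma x)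
    (hb : ClassM b) (hbt : ClassM bt)
    (f : ℝ → ℝ) (hf : ContDiff ℝ 2 f) (hfd : ∀ x, deriv f x ≠ 0)
    (u ut : ℝ → ℝ → ℝ)
    (hu : IsClassicalSolution T b sigma f u)
    (hut : IsClassicalSolution T bt sigma f ut)
    (ε : ℝ) (hε : ε ∈ Ioo 0 T)
    (ω : Set ℝ) (hω : IsOpen ω) (hωne : ω.Nonempty)
    (hobs : ∀ t ∈ Ioo 0 ε, ∀ x ∈ ω, u t x = ut t x) :
    ∀ x : ℝ, b x = bt x := by
  obtain ⟨x0, hx0⟩ := hωne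
  obtain ⟨Ks, hKs⟩ := hsLip
  obtain ⟨⟨Kb, hKb⟩, pb⟩ := hb
  obtain ⟨⟨Kbt, hKbt⟩, pbt⟩ := hbt
  have hfc : Continuous (deriv f) := hf.continuous_deriv (by norm_num)
  intro x
  rcases le_total x0 x with h | h
  · exact right_ext T sigma b bt hKs.continuous hspos hKb.continuous hKbt.continuous
      (right_germ b pb) (right_germ bt pbt) f hfc hfd u ut hu hut ε hε ω hω x0 hx0 hobs x h
  · have hdf : deriv (fun y => f (-y)) = fun y => -deriv f (-y) :=
      funext fun y => deriv_comp_neg f y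
    have := right_ext T (fun y => sigma (-y)) (fun y => -b (-y)) (fun y => -bt (-y))
      (hKs.continuous.comp continuous_neg) (fun y => hspos (-y))
      (hKb.continuous.comp continuous_neg).neg (hKbt.continuous.comp continuous_neg).neg
      (reflect_germ b (left_germ b pb)) (reflect_germ bt (left_germ bt pbt))
      (fun y => f (-y)) (by rw [hdf]; exact (hfc.comp continuous_neg).neg)
      (fun y => by rw [hdf]; exact neg_ne_zero.2 (hfd (-y)))
      (fun t y => u t (-y)) (fun t y => ut t (-y))
      (reflect_sol T b sigma f u hu) (reflect_sol T bt sigma f ut hut)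
      ε hε ((fun y => -y) ⁻¹' ω) (hω.preimage continuous_neg) (-x0) (by simpa using hx0)
      (fun t ht y hy => hobs t ht (-y) hy) (-x) (by linarith)
    simpa using this
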